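/- Let c : ℝ → ℝ be a continuous function and m > 0 a constant with c(s) ≥ m for all s ∈ ℝ. Then the functional u ↦ ∫_{ℝ²} ( 4 (∂_s∂_t u)² − c(s) (∂_t u)² ) ds dt is indefinite on C_c^∞(ℝ²): there exist u, v ∈ C_c^∞(ℝ²) with ∫_{ℝ²} ( 4 (∂_s∂_t u)² − c(s) (∂_t u)² ) > 0 and ∫_{ℝ²} ( 4 (∂_s∂_t v)² − c(s) (∂_t v)² ) < 0. -/

import Mathlib

open MeasureTheory Real

/-- Partial derivative of `u : ℝ² → ℝ` in the first coordinate. -/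
noncomputable def pdS (u : ℝ × ℝ → ℝ) (x : ℝ × ℝ) : ℝ := fderiv ℝ u x (1, 0)

/-- Partial derivative of `u : ℝ² → ℝ` in the second coordinate. -/
noncomputable def pdT (u : ℝ × ℝ → ℝ) (x : ℝ × ℝ) : ℝ := fderiv ℝ u x (0, 1)

/-!
On a product `u(s, t) = f(s) g(t)` the functional factors as `(∫ 4 f'² - c f²) * ∫ g'²`, so it is
enough to make the first factor, the quadratic form of the Schrödinger operator `-4 d²/ds² - c` on
the line, take both signs. Along the dilations `f(s) = φ(λ s)` it equals
`4 λ ∫ φ'² - ∫ c(s) φ(λ s)² ds`. As `λ → ∞` the first term is unbounded while the second stays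
bounded above. As `λ → 0` the first term vanishes, while the second stays above `∫_K c` for every
compact `K`, provided that `c ≥ 0` and `φ = 1` near `0`.
-/

open Filter Topology

/-- The space `C_c^∞(E)` of smooth compactly supported real functions, as a predicate. -/
def IsTestFunction {E : Type*} [NormedAddCommGroup E] [NormedSpace ℝ E] (u : E → ℝ) : Prop :=
  ContDiff ℝ (⊤ : ℕ∞) u ∧ HasCompactSupport u

/-- The Hamiltonian second variation of the area of the normal bundle, with `c = κ² + 2K`. -/
noncomputable def secondVariation (c : ℝ → ℝ) (u : ℝ × ℝ → ℝ) : ℝ :=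
  ∫ x : ℝ × ℝ, (4 * (pdS (pdT u) x) ^ 2 - c x.1 * (pdT u x) ^ 2)

/-- The quadratic form of the Schrödinger operator `-4 d²/ds² - c` on the line, which is the factor
of `secondVariation c` depending on the first coordinate. -/
noncomputable def schrodingerForm (c f : ℝ → ℝ) : ℝ :=
  ∫ s, (4 * deriv f s ^ 2 - c s * f s ^ 2)

lemma hasCompactSupport_sq {X : Type*} [TopologicalSpace X] {f : X → ℝ}
    (hf : HasCompactSupport f) : HasCompactSupport fun x => f x ^ 2 :=
  hf.comp_left (g := fun y : ℝ => y ^ 2) (by simp)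

section TestFunctions

variable {E F : Type*} [NormedAddCommGroup E] [NormedSpace ℝ E]
  [NormedAddCommGroup F] [NormedSpace ℝ F]

lemma IsTestFunction.mul_prod {f : E → ℝ} {g : F → ℝ} (hf : IsTestFunction f)
    (hg : IsTestFunction g) : IsTestFunction fun x : E × F => f x.1 * g x.2 := by
  refine ⟨(hf.1.comp contDiff_fst).mul (hg.1.comp contDiff_snd),
    .intro (hf.2.isCompact.prod hg.2.isCompact) fun x hx => ?_⟩
  by_contra h
  exact hx ⟨subset_tsupport _ (left_ne_zero_of_mul h), subset_tsupport _ (right_ne_zero_of_mul h)⟩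

lemma IsTestFunction.comp_smul {f : E → ℝ} (hf : IsTestFunction f) {a : ℝ} (ha : a ≠ 0) :
    IsTestFunction fun x => f (a • x) :=
  ⟨hf.1.comp (contDiff_const_smul a), hf.2.comp_smul ha⟩

lemma exists_isTestFunction_eventuallyEq_one [FiniteDimensional ℝ E] (x : E) :
    ∃ φ : E → ℝ, IsTestFunction φ ∧ φ =ᶠ[𝓝 x] 1 :=
  let b : ContDiffBump x := default
  ⟨b, ⟨b.contDiff, b.hasCompactSupport⟩, b.eventuallyEq_one⟩

end TestFunctions

section Products

variable {f g : ℝ → ℝ}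

lemma hasFDerivAt_mul_prod (hf : Differentiable ℝ f) (hg : Differentiable ℝ g) (x : ℝ × ℝ) :
    HasFDerivAt (fun x : ℝ × ℝ => f x.1 * g x.2)
      (f x.1 • deriv g x.2 • ContinuousLinearMap.snd ℝ ℝ ℝ +
        g x.2 • deriv f x.1 • ContinuousLinearMap.fst ℝ ℝ ℝ) x :=
  ((hf x.1).hasDerivAt.comp_hasFDerivAt x hasFDerivAt_fst).mul
    ((hg x.2).hasDerivAt.comp_hasFDerivAt x hasFDerivAt_snd)

lemma pdS_mul_prod (hf : Differentiable ℝ f) (hg : Differentiable ℝ g) :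
    pdS (fun x => f x.1 * g x.2) = fun x => deriv f x.1 * g x.2 := by
  funext x
  simp [pdS, (hasFDerivAt_mul_prod hf hg x).fderiv, mul_comm]

lemma pdT_mul_prod (hf : Differentiable ℝ f) (hg : Differentiable ℝ g) :
    pdT (fun x => f x.1 * g x.2) = fun x => f x.1 * deriv g x.2 := by
  funext x
  simp [pdT, (hasFDerivAt_mul_prod hf hg x).fderiv]

lemma secondVariation_mul_prod (c : ℝ → ℝ) (hf : Differentiable ℝ f) (hg : Differentiable ℝ g)
    (hg' : Differentiable ℝ (deriv g)) :
    secondVariation c (fun x => f x.1 * g x.2) = schrodingerForm c f * ∫ t, deriv g t ^ 2 := by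
  rw [secondVariation, pdT_mul_prod hf hg, pdS_mul_prod hf hg', schrodingerForm,
    ← integral_prod_mul, ← Measure.volume_eq_prod]
  congr 1 with x
  ring

end Products

lemma integral_deriv_sq_pos {f : ℝ → ℝ} (hf : ContDiff ℝ 1 f) (hfs : HasCompactSupport f)
    (hne : f ≠ 0) : 0 < ∫ s, deriv f s ^ 2 := by
  obtain ⟨x, hx⟩ : ∃ x, deriv f x ≠ 0 := by
    by_contra! hderiv
    have hconst := is_const_of_deriv_eq_zero (hf.differentiable one_ne_zero) hderiv
    obtain ⟨y, hy⟩ := (Set.ne_univ_iff_exists_notMem _).1 hfs.isCompact.ne_univ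
    exact hne (funext fun z => (hconst z y).trans (image_eq_zero_of_notMem_tsupport hy))
  exact ((hf.continuous_deriv le_rfl).pow 2).integral_pos_of_hasCompactSupport_nonneg_nonzero
    (hasCompactSupport_sq hfs.deriv) (fun s => sq_nonneg _) (pow_ne_zero 2 hx)

lemma exists_isCompact_setIntegral_pos {X : Type*} [TopologicalSpace X] [SigmaCompactSpace X]
    [R1Space X] [MeasurableSpace X] [BorelSpace X] {μ : Measure X} {c : X → ℝ}
    (hc : LocallyIntegrable c μ) (hc_nonneg : 0 ≤ᵐ[μ] c) (hc_ne : ¬ c =ᵐ[μ] 0) :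
    ∃ K, IsCompact K ∧ 0 < ∫ x in K, c x ∂μ := by
  by_contra! h
  exact hc_ne <| ae_eq_zero_of_forall_setIntegral_isCompact_eq_zero' hc fun K hK =>
    (h K hK).antisymm (setIntegral_nonneg_of_ae hc_nonneg)

section Dilation

variable {c φ : ℝ → ℝ}

lemma integrable_mul_sq_comp_mul_left (hc : LocallyIntegrable c) (hφ : Continuous φ)
    (hφs : HasCompactSupport φ) {a : ℝ} (ha : a ≠ 0) :
    Integrable fun s => c s * φ (a * s) ^ 2 := by
  have hsupp : HasCompactSupport fun s => φ (a * s) :=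
    hφs.comp_homeomorph (Homeomorph.mulLeft₀ a ha)
  have hcont : Continuous fun s => φ (a * s) ^ 2 := by fun_prop
  exact hc.integrable_smul_right_of_hasCompactSupport hcont (hasCompactSupport_sq hsupp)

lemma schrodingerForm_comp_mul_left (hc : LocallyIntegrable c) (hφ : ContDiff ℝ 1 φ)
    (hφs : HasCompactSupport φ) {a : ℝ} (ha : 0 < a) :
    schrodingerForm c (fun s => φ (a * s)) =
      4 * a * (∫ s, deriv φ s ^ 2) - ∫ s, c s * φ (a * s) ^ 2 := by
  have hderiv (s : ℝ) : 4 * (deriv (fun s => φ (a * s)) s) ^ 2 =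
      4 * a ^ 2 * deriv φ (a * s) ^ 2 := by
    rw [deriv_comp_mul_left, smul_eq_mul]
    ring
  have hscale : ∫ s, deriv φ (a * s) ^ 2 = a⁻¹ * ∫ s, deriv φ s ^ 2 := by
    rw [Measure.integral_comp_mul_left (fun s => deriv φ s ^ 2) a, abs_of_pos (inv_pos.2 ha),
      smul_eq_mul]
  simp only [schrodingerForm, hderiv]
  rw [integral_sub
      (integrable_mul_sq_comp_mul_left (locallyIntegrable_const _) (hφ.continuous_deriv le_rfl)
        hφs.deriv ha.ne')
      (integrable_mul_sq_comp_mul_left hc hφ.continuous hφs ha.ne'),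
    integral_const_mul, hscale]
  field_simp

lemma exists_integral_mul_sq_comp_mul_left_le (hc : LocallyIntegrable c) (hφ : Continuous φ)
    (hφs : HasCompactSupport φ) :
    ∃ C, ∀ a, 1 ≤ a → ∫ s, c s * φ (a * s) ^ 2 ≤ C := by
  obtain ⟨M, hM⟩ := hφs.exists_bound_of_continuous hφ
  obtain ⟨R, hR⟩ := hφs.isCompact.isBounded.subset_closedBall 0
  let B := Metric.closedBall (0 : ℝ) R
  refine ⟨∫ s in B, |c s| * M ^ 2, fun a ha => ?_⟩
  have hvanish (s : ℝ) (hs : s ∉ B) : c s * φ (a * s) ^ 2 = 0 := by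
    have hnorm : R < |a * s| := by
      have hs' : R < |s| := by simpa [B] using hs
      rw [abs_mul]
      exact hs'.trans_le (le_mul_of_one_le_left (abs_nonneg s) (ha.trans (le_abs_self a)))
    have hmem : a * s ∉ tsupport φ := fun h => hnorm.not_ge (by simpa using hR h)
    simp [image_eq_zero_of_notMem_tsupport hmem]
  have hbound (s : ℝ) : c s * φ (a * s) ^ 2 ≤ |c s| * M ^ 2 :=
    mul_le_mul (le_abs_self _) (sq_le_sq.2 ((hM _).trans (le_abs_self M))) (sq_nonneg _)
      (abs_nonneg _)
  rw [← setIntegral_eq_integral_of_forall_compl_eq_zero hvanish]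
  exact setIntegral_mono
    (integrable_mul_sq_comp_mul_left hc hφ hφs (one_pos.trans_le ha).ne').integrableOn
    ((hc.integrableOn_isCompact (isCompact_closedBall 0 R)).abs.mul_const _) hbound

lemma eventually_setIntegral_le_integral_mul_sq_comp_mul_left (hc : LocallyIntegrable c)
    (hc_nonneg : 0 ≤ᵐ[volume] c) (hφ : Continuous φ) (hφs : HasCompactSupport φ)
    (hφ_one : φ =ᶠ[𝓝 0] 1) {K : Set ℝ} (hK : IsCompact K) :
    ∀ᶠ a in 𝓝[>] 0, ∫ s in K, c s ≤ ∫ s, c s * φ (a * s) ^ 2 := by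
  have hone : ∀ᶠ a in 𝓝 (0 : ℝ), ∀ s ∈ K, φ (a * s) = 1 := by
    refine hK.eventually_forall_of_forall_eventually fun s _ => ?_
    have hmul : Tendsto (fun z : ℝ × ℝ => z.1 * z.2) (𝓝 (0, s)) (𝓝 0) := by
      simpa using (continuous_mul (M := ℝ)).tendsto (0, s)
    exact hmul.eventually hφ_one
  filter_upwards [hone.filter_mono nhdsWithin_le_nhds, self_mem_nhdsWithin] with a ha ha_pos
  calc ∫ s in K, c s = ∫ s in K, c s * φ (a * s) ^ 2 :=
        setIntegral_congr_fun hK.measurableSet fun s hs => by simp [ha s hs]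
    _ ≤ ∫ s, c s * φ (a * s) ^ 2 :=
        setIntegral_le_integral
          (integrable_mul_sq_comp_mul_left hc hφ hφs (Set.mem_Ioi.1 ha_pos).ne')
          (hc_nonneg.mono fun s hs => mul_nonneg hs (sq_nonneg _))

lemma exists_schrodingerForm_comp_mul_left_pos (hc : LocallyIntegrable c) (hφ : ContDiff ℝ 1 φ)
    (hφs : HasCompactSupport φ) (hφ_ne : φ ≠ 0) :
    ∃ a > 0, 0 < schrodingerForm c fun s => φ (a * s) := by
  obtain ⟨C, hC⟩ := exists_integral_mul_sq_comp_mul_left_le hc hφ.continuous hφs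
  have hlim : Tendsto (fun a : ℝ => 4 * a * ∫ s, deriv φ s ^ 2) atTop atTop :=
    (tendsto_id.const_mul_atTop four_pos).atTop_mul_const (integral_deriv_sq_pos hφ hφs hφ_ne)
  obtain ⟨a, ha, ha_one⟩ := ((hlim.eventually_gt_atTop C).and (eventually_ge_atTop 1)).exists
  have ha_pos : 0 < a := one_pos.trans_le ha_one
  refine ⟨a, ha_pos, ?_⟩
  rw [schrodingerForm_comp_mul_left hc hφ hφs ha_pos]
  exact sub_pos.2 ((hC a ha_one).trans_lt ha)

lemma exists_schrodingerForm_comp_mul_left_neg (hc : LocallyIntegrable c)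
    (hc_nonneg : 0 ≤ᵐ[volume] c) (hc_ne : ¬ c =ᵐ[volume] 0) (hφ : ContDiff ℝ 1 φ)
    (hφs : HasCompactSupport φ) (hφ_one : φ =ᶠ[𝓝 0] 1) :
    ∃ a > 0, schrodingerForm c (fun s => φ (a * s)) < 0 := by
  obtain ⟨K, hK, hcK⟩ := exists_isCompact_setIntegral_pos hc hc_nonneg hc_ne
  have hlim : Tendsto (fun a : ℝ => 4 * a * ∫ s, deriv φ s ^ 2) (𝓝[>] 0) (𝓝 0) :=
    tendsto_nhdsWithin_of_tendsto_nhds (Continuous.tendsto' (by fun_prop) 0 0 (by simp))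
  obtain ⟨a, ha_lt, ha_le, ha_pos⟩ := ((hlim.eventually_lt_const hcK).and
    ((eventually_setIntegral_le_integral_mul_sq_comp_mul_left hc hc_nonneg hφ.continuous hφs
      hφ_one hK).and self_mem_nhdsWithin)).exists
  refine ⟨a, ha_pos, ?_⟩
  rw [schrodingerForm_comp_mul_left hc hφ hφs ha_pos]
  exact sub_neg.2 (ha_lt.trans_le ha_le)

end Dilation

theorem normal_bundle_H_unstable_general {c : ℝ → ℝ} (hc : LocallyIntegrable c)
    (hc_nonneg : 0 ≤ᵐ[volume] c) (hc_ne : ¬ c =ᵐ[volume] 0) :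
    ∃ u v : ℝ × ℝ → ℝ, IsTestFunction u ∧ IsTestFunction v ∧
      0 < secondVariation c u ∧ secondVariation c v < 0 := by
  obtain ⟨φ, hφ, hφ_one⟩ := exists_isTestFunction_eventuallyEq_one (0 : ℝ)
  have hφ_C1 : ContDiff ℝ 1 φ := hφ.1.of_le (by simp)
  have hφ_ne : φ ≠ 0 := fun h => by simpa [h] using hφ_one.eq_of_nhds
  have hφ' : Differentiable ℝ (deriv φ) :=
    (contDiff_infty_iff_deriv.1 hφ.1).2.differentiable (by simp)
  have hφ'_pos : 0 < ∫ t, deriv φ t ^ 2 := integral_deriv_sq_pos hφ_C1 hφ.2 hφ_ne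
  have hprod {a : ℝ} (ha : 0 < a) : IsTestFunction (fun x : ℝ × ℝ => φ (a * x.1) * φ x.2) ∧
      secondVariation c (fun x => φ (a * x.1) * φ x.2) =
        schrodingerForm c (fun s => φ (a * s)) * ∫ t, deriv φ t ^ 2 :=
    have hdil : IsTestFunction fun s => φ (a * s) := hφ.comp_smul ha.ne'
    ⟨hdil.mul_prod hφ, secondVariation_mul_prod c (hdil.1.differentiable (by simp))
      (hφ.1.differentiable (by simp)) hφ'⟩
  obtain ⟨a, ha, ha_form⟩ := exists_schrodingerForm_comp_mul_left_pos hc hφ_C1 hφ.2 hφ_ne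
  obtain ⟨b, hb, hb_form⟩ :=
    exists_schrodingerForm_comp_mul_left_neg hc hc_nonneg hc_ne hφ_C1 hφ.2 hφ_one
  exact ⟨_, _, (hprod ha).1, (hprod hb).1, (hprod ha).2 ▸ mul_pos ha_form hφ'_pos,
    (hprod hb).2 ▸ mul_neg_of_neg_of_pos hb_form hφ'_pos⟩

/-- if `c : ℝ → ℝ` is continuous and bounded below by `m > 0`, then the
functional `u ↦ ∫_{ℝ²} (4(∂ₛ∂ₜu)² − c(s)(∂ₜu)²)` is indefinite on `C_c^∞(ℝ²)`
(H-instability of the normal bundle of an unbounded curve with `κ² + 2K` uniformly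
positive). -/
theorem normal_bundle_H_unstable
    (c : ℝ → ℝ) (hc : Continuous c) (m : ℝ) (hm : 0 < m) (hcm : ∀ s, m ≤ c s) :
    ∃ u v : ℝ × ℝ → ℝ,
      (ContDiff ℝ (⊤ : ℕ∞) u ∧ HasCompactSupport u) ∧ (ContDiff ℝ (⊤ : ℕ∞) v ∧ HasCompactSupport v) ∧
      0 < (∫ x : ℝ × ℝ, (4 * (pdS (pdT u) x) ^ 2 - c x.1 * (pdT u x) ^ 2)) ∧
      (∫ x : ℝ × ℝ, (4 * (pdS (pdT v) x) ^ 2 - c x.1 * (pdT v x) ^ 2)) < 0 := by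
  exact normal_bundle_H_unstable_general hc.locallyIntegrable
    (.of_forall fun s => hm.le.trans (hcm s))
    fun h => h.exists.elim fun s hs => (hm.trans_le (hcm s)).ne' hs
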